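/- arXiv:math/0305190 — 9 statements merged into one kernel-verified Lean document; each statement's English description precedes it below -/
import Mathlib

section
/- Let n > q ≥ 1 be coprime integers and let q' be the unique integer with 1 ≤ q' < n and q·q' ≡ 1 (mod n). Then n/q is a T-fraction if and only if γ(n/q') + γ(n/q) = ι(n/q). -/
/-- `g = gcd(n, q+1)`. -/
def Tg (n q : ℕ) : ℕ := Nat.gcd n (q + 1)

/-- `ι(n/q) = n / gcd(n, q+1)`. -/
def Tiota (n q : ℕ) : ℕ := n / Tg n q

/-- `γ(n/q) = (q+1) / gcd(n, q+1)`. -/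
def Tgamma (n q : ℕ) : ℕ := (q + 1) / Tg n q

/-- `n/q` (with `n > q ≥ 1` coprime) is a T-fraction if `n ∣ (q+1)²` and `q ≠ n-1`. -/
def IsTFraction (n q : ℕ) : Prop :=
  1 ≤ q ∧ q < n ∧ Nat.Coprime n q ∧ n ∣ (q + 1) ^ 2 ∧ q ≠ n - 1

/-- Let `n > q ≥ 1` be coprime and let `q'` be the unique integer with `1 ≤ q' < n` and
`q·q' ≡ 1 (mod n)`. Then `n/q` is a T-fraction iff `γ(n/q') + γ(n/q) = ι(n/q)`. -/
theorem tfraction_iff_gamma_add_gamma_eq_iota (n q q' : ℕ)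
    (hq : 1 ≤ q) (hqn : q < n) (hcop : Nat.Coprime n q)
    (hq' : 1 ≤ q') (hq'n : q' < n) (hinv : q * q' ≡ 1 [MOD n]) :
    IsTFraction n q ↔ Tgamma n q' + Tgamma n q = Tiota n q := by
  obtain ⟨k, hk⟩ : ∃ k, q * q' = 1 + n * k := by
    have h1 : 1 ≤ q * q' := Nat.mul_pos hq hq'
    obtain ⟨k, hk⟩ := (Nat.modEq_iff_dvd' h1).1 hinv.symm
    exact ⟨k, by omega⟩
  have hg : Tg n q' = Tg n q := by
    unfold Tg
    have e1 : q * (q' + 1) = (q + 1) + n * k := by rw [mul_add, hk]; ring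
    rw [← Nat.Coprime.gcd_mul_left_cancel_right (q' + 1) hcop.symm, e1]
    simp
  have key : n ∣ (q + 1) ^ 2 ↔ n ∣ q' + 1 + (q + 1) := by
    have e2 : q * (q' + 1 + (q + 1)) = (q + 1) ^ 2 + n * k := by
      have : q * (q' + 1 + (q + 1)) = q * q' + q ^ 2 + 2 * q := by ring
      rw [this, hk]; ring
    rw [← hcop.dvd_mul_left (n := q' + 1 + (q + 1)), e2]
    exact (Nat.dvd_add_left (Dvd.intro _ rfl)).symm
  have d1 : Tg n q ∣ q' + 1 := hg ▸ Nat.gcd_dvd_right n (q' + 1)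
  have d2 : Tg n q ∣ q + 1 := Nat.gcd_dvd_right n (q + 1)
  have d3 : Tg n q ∣ n := Nat.gcd_dvd_left n (q + 1)
  have hr : Tgamma n q' + Tgamma n q = Tiota n q ↔ q' + 1 + (q + 1) = n := by
    unfold Tgamma Tiota
    rw [hg, ← Nat.add_div_of_dvd_right d1]
    exact Nat.div_left_inj (dvd_add d1 d2) d3
  rw [hr]
  unfold IsTFraction
  rw [key]
  constructor
  · rintro ⟨-, -, -, ⟨c, hc⟩, hne⟩
    have hc2 : c < 2 := by
      by_contra h
      have : n * 2 ≤ n * c := Nat.mul_le_mul_left n (by omega)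
      omega
    interval_cases c <;> omega
  · intro h
    exact ⟨hq, hqn, hcop, by rw [h], by omega⟩
end

section
/- Let n > q ≥ 1 be coprime integers with ι(n/q) = 2. Then γ(n/q) = 1, n is divisible by 4, q = n/2 − 1, and n/q is a T-fraction. -/
/-- If `n > q ≥ 1` are coprime with `ι(n/q) = 2`, then `γ(n/q) = 1`, `4 ∣ n`,
`q = n/2 − 1`, and `n/q` is a T-fraction. -/
theorem iota_eq_two (n q : ℕ) (hq : 1 ≤ q) (hqn : q < n) (hcop : Nat.Coprime n q)
    (hiota : Tiota n q = 2) :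
    Tgamma n q = 1 ∧ 4 ∣ n ∧ q = n / 2 - 1 ∧ IsTFraction n q := by
  have hdn : Nat.gcd n (q + 1) ∣ n := Nat.gcd_dvd_left _ _
  obtain ⟨c, hc⟩ := Nat.gcd_dvd_right n (q + 1)
  have hn : n = 2 * Nat.gcd n (q + 1) := by
    have h := Nat.div_mul_cancel hdn
    unfold Tiota Tg at hiota
    rw [hiota] at h
    exact h.symm
  have hg : Nat.gcd n (q + 1) = q + 1 := by
    have hle : q + 1 ≤ n := hqn
    have hne : q + 1 ≠ n := by
      intro h
      rw [h, Nat.gcd_self] at hn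
      omega
    have hpos : 0 < Nat.gcd n (q + 1) := by omega
    generalize Nat.gcd n (q + 1) = g at *
    have hc2 : c < 2 := by
      by_contra hcon
      have : g * 2 ≤ g * c := Nat.mul_le_mul_left g (by omega)
      omega
    interval_cases c <;> omega
  rw [hg] at hn
  have hodd : ¬ 2 ∣ q := by
    intro h
    have h2 : 2 ∣ n.gcd q := Nat.dvd_gcd ⟨_, hn⟩ h
    rw [hcop] at h2
    omega
  refine ⟨?_, by omega, by omega, hq, hqn, hcop, ?_, by omega⟩
  · unfold Tgamma Tg
    rw [hg]
    exact Nat.div_self (by omega)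
  · obtain ⟨k, hk⟩ : 2 ∣ q + 1 := by omega
    exact ⟨k, by rw [hn, hk]; ring⟩
end

section
/- Let n > q ≥ 1 be coprime integers. Then ι(n/q) = 2 if and only if the Hirzebruch–Jung expansion of n/q is either [4] or [3,2,…,2,3]. In that case β(n/q) is a positive integer equal to ρ(n/q); explicitly n = 4β, q = 2β − 1, and the expansion is [4] when β = 1 and [3,2,…,2,3] with β − 2 intermediate 2's when β ≥ 2. -/
/-- Hirzebruch–Jung continued fraction: `hj [b] = b`, `hj (b :: l) = b - 1 / hj l`.
(With the conventions `hj [] = 0` and `1/0 = 0`, this agrees with the recursion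
`[b_ρ] = b_ρ`, `[b_1,…,b_ρ] = b_1 − 1/[b_2,…,b_ρ]`.) -/
def hj : List ℚ → ℚ
  | [] => 0
  | b :: l => b - 1 / hj l

/-- `β(n/q) = gcd(n, q+1)² / n ∈ ℚ`. -/
def Tbeta (n q : ℕ) : ℚ := (Tg n q : ℚ) ^ 2 / (n : ℚ)

theorem hj_gt_one (L : List ℤ) (h : ∀ b ∈ L, 2 ≤ b) (hne : L ≠ []) :
    1 < hj (L.map (fun b : ℤ => (b : ℚ))) := by
  induction L with
  | nil => exact absurd rfl hne
  | cons b l ih =>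
    have hb : (2 : ℚ) ≤ b := by exact_mod_cast h b (by simp)
    by_cases hl : l = []
    · subst hl
      simp [hj]
      linarith
    · have h1 := ih (fun c hc => h c (by simp [hc])) hl
      have h2 : 1 / hj (l.map (fun b : ℤ => (b : ℚ))) < 1 := by
        rw [div_lt_one (by linarith)]
        exact h1
      simp only [List.map_cons, hj]
      linarith

theorem hj_inv_bounds (L : List ℤ) (h : ∀ b ∈ L, 2 ≤ b) :
    0 ≤ 1 / hj (L.map (fun b : ℤ => (b : ℚ))) ∧ 1 / hj (L.map (fun b : ℤ => (b : ℚ))) < 1 := by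
  by_cases hl : L = []
  · subst hl
    simp [hj]
  · have h1 := hj_gt_one L h hl
    constructor
    · apply div_nonneg <;> linarith
    · rw [div_lt_one (by linarith)]
      exact h1

theorem hj_unique (L M : List ℤ) (hL : ∀ b ∈ L, 2 ≤ b) (hM : ∀ b ∈ M, 2 ≤ b)
    (h : hj (L.map (fun b : ℤ => (b : ℚ))) = hj (M.map (fun b : ℤ => (b : ℚ)))) : L = M := by
  induction L generalizing M with
  | nil =>
    by_contra hne
    have := hj_gt_one M hM (fun h => hne h.symm)
    simp [hj] at h
    linarith
  | cons b l ih =>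
    cases M with
    | nil =>
      have := hj_gt_one (b :: l) hL (by simp)
      rw [h] at this
      simp [hj] at this
      linarith
    | cons c m =>
      have hl : ∀ b ∈ l, 2 ≤ b := fun x hx => hL x (by simp [hx])
      have hm : ∀ b ∈ m, 2 ≤ b := fun x hx => hM x (by simp [hx])
      obtain ⟨a1, a2⟩ := hj_inv_bounds l hl
      obtain ⟨c1, c2⟩ := hj_inv_bounds m hm
      simp only [List.map_cons, hj] at h
      have hbc : b = c := by
        have h1 : (b : ℚ) < c + 1 := by linarith
        have h2 : (c : ℚ) < b + 1 := by linarith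
        have h3 : b < c + 1 := by exact_mod_cast h1
        have h4 : c < b + 1 := by exact_mod_cast h2
        omega
      subst hbc
      have h5 : 1 / hj (l.map (fun b : ℤ => (b : ℚ))) = 1 / hj (m.map (fun b : ℤ => (b : ℚ))) := by
        linarith
      rw [one_div, one_div, inv_inj] at h5
      rw [ih m hl hm h5]

theorem hj_tail (k : ℕ) :
    hj ((List.replicate k (2 : ℤ) ++ [3]).map (fun b : ℤ => (b : ℚ))) = (2 * k + 3) / (2 * k + 1) := by
  induction k with
  | zero => simp [hj]
  | succ k ih =>
    simp only [List.replicate_succ, List.cons_append, List.map_cons, hj, ih]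
    push_cast
    field_simp
    ring

theorem hj_full (k : ℕ) :
    hj ((3 :: (List.replicate k (2 : ℤ) ++ [3])).map (fun b : ℤ => (b : ℚ)))
      = ((4 * (k + 2) : ℕ) : ℚ) / ((2 * k + 3 : ℕ) : ℚ) := by
  rw [List.map_cons, hj, hj_tail]
  push_cast
  field_simp
  ring

theorem frac_eq (n q a b : ℕ) (hq : 1 ≤ q) (hb : 1 ≤ b) (h1 : Nat.Coprime n q)
    (h2 : Nat.Coprime a b) (h : (a : ℚ) / b = (n : ℚ) / q) : n = a ∧ q = b := by
  have hq' : (q : ℚ) ≠ 0 := by positivity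
  have hb' : (b : ℚ) ≠ 0 := by positivity
  rw [div_eq_div_iff hb' hq'] at h
  have h' : a * q = n * b := by exact_mod_cast h
  have e1 : n ∣ a := h1.dvd_of_dvd_mul_right ⟨b, h'⟩
  have e2 : a ∣ n := h2.dvd_of_dvd_mul_right ⟨q, h'.symm⟩
  have e3 : q ∣ b := h1.symm.dvd_of_dvd_mul_left ⟨a, by rw [← h', mul_comm]⟩
  have e4 : b ∣ q := h2.symm.dvd_of_dvd_mul_left ⟨n, by rw [h', mul_comm]⟩
  exact ⟨Nat.dvd_antisymm e1 e2, Nat.dvd_antisymm e3 e4⟩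

theorem cop_aux (k : ℕ) : Nat.Coprime (4 * (k + 2)) (2 * k + 3) := by
  have h : Nat.Coprime (2 * k + 4) (2 * k + 3) := by
    have : 2 * k + 4 = 2 * k + 3 + 1 := rfl
    rw [this]
    simp
  have h2 : Nat.Coprime 2 (2 * k + 3) := by
    rw [Nat.coprime_two_left]
    exact ⟨k + 1, by ring⟩
  have h3 : 4 * (k + 2) = 2 * (2 * k + 4) := by ring
  rw [h3]
  exact Nat.Coprime.mul_left h2 h

theorem Tg_explicit (β : ℕ) (hβ : 0 < β) : Tg (4 * β) (2 * β - 1) = 2 * β := by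
  unfold Tg
  rw [show 2 * β - 1 + 1 = 2 * β by omega]
  exact Nat.gcd_eq_right ⟨2, by ring⟩

theorem iota_two_explicit (n q : ℕ) (hq : 1 ≤ q) (hqn : q < n)
    (hcop : Nat.Coprime n q) (h : Tiota n q = 2) :
    ∃ β : ℕ, 0 < β ∧ n = 4 * β ∧ q = 2 * β - 1 := by
  unfold Tiota Tg at h
  obtain ⟨c, hc⟩ := Nat.gcd_dvd_left n (q + 1)
  obtain ⟨d, hd⟩ := Nat.gcd_dvd_right n (q + 1)
  have hg : 0 < n.gcd (q + 1) := Nat.gcd_pos_of_pos_right _ (by omega)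
  have hn : n = n.gcd (q + 1) * 2 := by
    have := Nat.div_mul_cancel (Nat.gcd_dvd_left n (q + 1))
    rw [h] at this
    omega
  have hqd : q + 1 = n.gcd (q + 1) := by
    have hdle : d ≤ 2 := by
      by_contra hcon
      have : n.gcd (q + 1) * 3 ≤ n.gcd (q + 1) * d := Nat.mul_le_mul_left _ (by omega)
      omega
    interval_cases d
    · omega
    · omega
    · have : q + 1 = n := by omega
      rw [this, Nat.gcd_self] at hn
      omega
  have hn2 : n = 2 * (q + 1) := by omega
  have hodd : Odd q := by
    rw [← Nat.coprime_two_left]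
    exact Nat.Coprime.coprime_dvd_left ⟨q + 1, hn2⟩ hcop
  obtain ⟨m, hm⟩ := hodd
  exact ⟨m + 1, by omega, by omega, by omega⟩

/-- Let `n > q ≥ 1` be coprime with Hirzebruch–Jung expansion `n/q = [b_1,…,b_ρ]`
(all `b_i ≥ 2`). Then `ι(n/q) = 2` iff the expansion is `[4]` or `[3,2,…,2,3]`.
In that case `β(n/q)` is a positive integer equal to `ρ(n/q)`; explicitly `n = 4β`,
`q = 2β − 1`, and the expansion is `[4]` when `β = 1` and `[3,2,…,2,3]` with `β − 2`
intermediate `2`'s when `β ≥ 2`. -/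
theorem iota_eq_two_iff_expansion (n q : ℕ) (hq : 1 ≤ q) (hqn : q < n)
    (hcop : Nat.Coprime n q) (L : List ℤ) (hL2 : ∀ b ∈ L, 2 ≤ b)
    (hval : hj (L.map (fun b => (b : ℚ))) = (n : ℚ) / (q : ℚ)) :
    (Tiota n q = 2 ↔ L = [4] ∨ ∃ k : ℕ, L = 3 :: (List.replicate k 2 ++ [3])) ∧
    (Tiota n q = 2 → ∃ β : ℕ, 0 < β ∧ (β : ℚ) = Tbeta n q ∧ β = L.length ∧
      n = 4 * β ∧ q = 2 * β - 1 ∧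
      (β = 1 → L = [4]) ∧
      (2 ≤ β → L = 3 :: (List.replicate (β - 2) 2 ++ [3]))) := by
  have hco : hj (L.map (fun b : ℤ => (b : ℚ))) = (n : ℚ) / (q : ℚ) := by
    rw [← hval]
    congr 1
    simp [List.map_eq_flatMap]
  clear hval
  rename' hco => hval
  have key : ∀ β : ℕ, 0 < β → n = 4 * β → q = 2 * β - 1 →
      (β : ℚ) = Tbeta n q ∧ β = L.length ∧
      (β = 1 → L = [4]) ∧ (2 ≤ β → L = 3 :: (List.replicate (β - 2) 2 ++ [3])) := by
    intro β hβ hn hq'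
    have hb : (β : ℚ) = Tbeta n q := by
      have : (β : ℚ) ≠ 0 := by positivity
      rw [Tbeta, hn, hq', Tg_explicit β hβ]
      push_cast
      field_simp
      norm_num
    have h1 : β = 1 → L = [4] := by
      intro h
      subst h
      apply hj_unique L [4] hL2 (by simp)
      rw [hval, hn, hq']
      simp [hj]
    have h2 : 2 ≤ β → L = 3 :: (List.replicate (β - 2) 2 ++ [3]) := by
      intro h
      obtain ⟨k, rfl⟩ := Nat.exists_eq_add_of_le h
      apply hj_unique L _ hL2
      · intro b hb
        simp at hb
        omega
      · rw [hj_full, hval, hn, hq']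
        have e1 : 2 + k - 2 = k := by omega
        have e2 : 2 * (2 + k) - 1 = 2 * k + 3 := by omega
        rw [e1, e2, add_comm 2 k]
    refine ⟨hb, ?_, h1, h2⟩
    rcases Nat.lt_or_ge β 2 with h | h
    · rw [h1 (by omega)]
      simp
      omega
    · rw [h2 h]
      simp
      omega
  have fwd := iota_two_explicit n q hq hqn hcop
  have bwd : ∀ β : ℕ, 0 < β → n = 4 * β → q = 2 * β - 1 → Tiota n q = 2 := by
    intro β hβ hn hq'
    rw [Tiota, hn, hq', Tg_explicit β hβ]
    rw [show 4 * β = 2 * (2 * β) by ring]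
    exact Nat.mul_div_cancel _ (by omega)
  refine ⟨⟨?_, ?_⟩, ?_⟩
  · intro h
    obtain ⟨β, hβ, hn, hq'⟩ := fwd h
    obtain ⟨-, -, h1, h2⟩ := key β hβ hn hq'
    rcases Nat.lt_or_ge β 2 with h | h
    · exact Or.inl (h1 (by omega))
    · exact Or.inr ⟨_, h2 h⟩
  · rintro (h | ⟨k, h⟩)
    · subst h
      have := frac_eq n q 4 1 hq le_rfl hcop (by simp) (by rw [← hval]; simp [hj])
      exact bwd 1 (by omega) (by omega) (by omega)
    · subst h
      rw [hj_full] at hval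
      have := frac_eq n q _ _ hq (by omega) hcop (cop_aux k) hval
      exact bwd (k + 2) (by omega) (by omega) (by omega)
  · intro h
    obtain ⟨β, hβ, hn, hq'⟩ := fwd h
    obtain ⟨a, b, h1, h2⟩ := key β hβ hn hq'
    exact ⟨β, hβ, a, b, hn, hq', h1, h2⟩
end

section
/- If the sequence [b_1,…,b_ρ] is a T-chain, then so are the sequences [2, b_1,…,b_{ρ−1}, b_ρ + 1] and [b_1 + 1, b_2,…,b_ρ, 2]. -/
/-- A sequence of integers `≥ 2` is a T-chain if its Hirzebruch–Jung value
equals `n/q` for some T-fraction `n/q`. -/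
def IsTChain (L : List ℤ) : Prop :=
  (∀ b ∈ L, 2 ≤ b) ∧
  ∃ n q : ℕ, IsTFraction n q ∧ hj (L.map (fun b => (b : ℚ))) = (n : ℚ) / (q : ℚ)

/-- Action of the product of the matrices `[[b,-1],[1,0]]` on a column vector. -/
def cont : List ℤ → ℤ × ℤ → ℤ × ℤ
  | [], p => p
  | x :: l, p => (x * (cont l p).1 - (cont l p).2, (cont l p).1)

theorem cont_append (l m : List ℤ) (p : ℤ × ℤ) : cont (l ++ m) p = cont l (cont m p) := by
  induction l with
  | nil => rfl
  | cons x l ih => simp [cont, ih]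

theorem cont_lin (l : List ℤ) (u v : ℤ) :
    cont l (u, v) = (u * (cont l (1, 0)).1 + v * (cont l (0, 1)).1,
      u * (cont l (1, 0)).2 + v * (cont l (0, 1)).2) := by
  induction l with
  | nil => simp [cont]
  | cons x l ih =>
    simp only [cont]
    rw [ih]
    ext <;> simp
    ring

theorem cont_det (l : List ℤ) :
    (cont l (1, 0)).1 * (cont l (0, 1)).2 - (cont l (0, 1)).1 * (cont l (1, 0)).2 = 1 := by
  induction l with
  | nil => simp [cont]
  | cons x l ih => simp only [cont]; linarith

theorem cont_inv (l : List ℤ) (h : ∀ b ∈ l, 2 ≤ b) :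
    0 ≤ (cont l (1, 0)).2 ∧ (cont l (1, 0)).2 < (cont l (1, 0)).1 ∧
    (cont l (0, 1)).1 ≤ 0 ∧ (cont l (0, 1)).1 < (cont l (0, 1)).2 ∧
    0 < (cont l (1, 0)).2 + (cont l (0, 1)).2 ∧
    (cont l (1, 0)).2 + (cont l (0, 1)).2 ≤ (cont l (1, 0)).1 + (cont l (0, 1)).1 := by
  induction l with
  | nil => simp [cont]
  | cons x l ih =>
    have hx : 2 ≤ x := h x (by simp)
    obtain ⟨h1, h2, h3, h4, h5, h6⟩ := ih (fun b hb => h b (by simp [hb]))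
    simp only [cont]
    refine ⟨?_, ?_, ?_, ?_, ?_, ?_⟩ <;> nlinarith

theorem cont_hj_aux (l : List ℤ) (h : ∀ b ∈ l, 2 ≤ b) :
    hj (l.map (Int.cast : ℤ → ℚ)) = ((cont l (1, 0)).1 : ℚ) / ((cont l (1, 0)).2 : ℚ) := by
  induction l with
  | nil => simp [cont, hj]
  | cons x l ih =>
    have hl : ∀ b ∈ l, 2 ≤ b := fun b hb => h b (by simp [hb])
    obtain ⟨h1, h2, -⟩ := cont_inv l hl
    have h0 : ((cont l (1, 0)).1 : ℚ) ≠ 0 := by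
      have : (cont l (1, 0)).1 ≠ 0 := by omega
      exact_mod_cast this
    simp only [List.map_cons, hj, cont, ih hl]
    push_cast
    rw [one_div_div]
    field_simp

theorem cont_hj (l : List ℤ) (h : ∀ b ∈ l, 2 ≤ b) :
    hj (l.map (fun b => (b : ℚ))) = ((cont l (1, 0)).1 : ℚ) / ((cont l (1, 0)).2 : ℚ) := by
  rw [← cont_hj_aux l h]
  congr 1
  induction l with
  | nil => rfl
  | cons x l ih =>
    have := ih (fun b hb => h b (by simp [hb]))
    simp at this ⊢
    try exact this

theorem tchain_of (M : List ℤ) (hM : ∀ b ∈ M, 2 ≤ b) (N Q u v : ℤ)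
    (hc : cont M (1, 0) = (N, Q)) (hQ : 1 ≤ Q) (hN : Q + 1 < N) (hb : N * u + Q * v = 1)
    (hd : N ∣ (Q + 1) ^ 2) : IsTChain M := by
  refine ⟨hM, N.toNat, Q.toNat, ?_, ?_⟩
  · lift N to ℕ using by omega
    lift Q to ℕ using by omega
    simp only [Int.toNat_natCast]
    refine ⟨by omega, by omega, ?_, by exact_mod_cast hd, by omega⟩
    rw [← Nat.isCoprime_iff_coprime]
    exact ⟨u, v, by linarith⟩
  · rw [cont_hj M hM, hc]
    lift N to ℕ using by omega
    lift Q to ℕ using by omega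
    simp

/-- The numerical data of a T-chain. -/
theorem tchain_data (L : List ℤ) (h : IsTChain L) :
    ∃ a s t : ℤ, 2 ≤ s ∧ s < a ∧ 0 < t ∧ s ^ 2 = a * t ∧
      cont L (1, 0) = (a, s - 1) ∧ cont L (0, 1) = (s + 1 - a, t + 1 - s) := by
  obtain ⟨hL, n, q, ⟨hq, hqn, hcop, hdvd, hne⟩, hv⟩ := h
  obtain ⟨h1, h2, h3, h4, h5, h6⟩ := cont_inv L hL
  have hdet := cont_det L
  rw [cont_hj L hL] at hv
  rcases hac : cont L (1, 0) with ⟨a, c⟩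
  rcases hbd : cont L (0, 1) with ⟨b, d⟩
  simp only [hac, hbd] at *
  have hc : c ≠ 0 := by
    rintro rfl
    have : (n : ℚ) / q ≠ 0 := by
      have : n ≠ 0 := by omega
      have : q ≠ 0 := by omega
      positivity
    apply this
    rw [← hv]; simp
  have hx : a * q = n * c := by
    have hq0 : (q : ℚ) ≠ 0 := by
      have : q ≠ 0 := by omega
      exact_mod_cast this
    have hc0 : (c : ℚ) ≠ 0 := by exact_mod_cast hc
    rw [div_eq_div_iff hc0 hq0] at hv
    exact_mod_cast hv
  have hcop' : IsCoprime (n : ℤ) (q : ℤ) := Nat.isCoprime_iff_coprime.2 hcop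
  have hac' : IsCoprime a c := ⟨d, -b, by linarith⟩
  have e1 : (n : ℤ) ∣ a := hcop'.dvd_of_dvd_mul_right ⟨c, hx⟩
  have e2 : a ∣ n := hac'.dvd_of_dvd_mul_right ⟨q, hx.symm⟩
  have ea : a = n := Int.dvd_antisymm (by omega) (by omega) e2 e1
  have ec : c = q := by
    rw [ea] at hx
    exact (mul_left_cancel₀ (by omega) hx).symm
  have hd : a ∣ (c + 1) ^ 2 := by rw [ea, ec]; exact_mod_cast hdvd
  have hca : c + 1 < a := by omega
  have hdv : a ∣ c - b + 2 := by
    apply hac'.dvd_of_dvd_mul_left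
    obtain ⟨k, hk⟩ := hd
    exact ⟨k - d, by linear_combination hk + hdet⟩
  have hsum : c - b + 2 = a := by
    obtain ⟨k, hk⟩ := hdv
    have k1 : 0 < k := by by_contra hh; nlinarith
    have k2 : k < 2 := by by_contra hh; nlinarith
    have : k = 1 := by omega
    subst this; linarith
  have hst : (c + 1) ^ 2 = a * (c + d) := by
    have : b = c + 2 - a := by linarith
    subst this
    linear_combination -hdet
  exact ⟨a, c + 1, c + d, by omega, hca, h5, hst, by ext <;> simp,
    by ext <;> simp <;> linarith⟩

theorem tchain_steps (L : List ℤ) (h : IsTChain L) :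
    IsTChain (2 :: (L.dropLast ++ [L.getLast! + 1])) ∧
    IsTChain ((L.head! + 1) :: (L.tail ++ [2])) := by
  obtain ⟨a, s, t, hs, hsa, ht, hst, hA, hB⟩ := tchain_data L h
  have hL := h.1
  constructor
  · rcases L.eq_nil_or_concat with rfl | ⟨l, x, rfl⟩
    · simp [cont] at hA; omega
    rw [List.concat_eq_append] at *
    have hlast : (l ++ [x]).getLast! = x := by simp [List.getLast!_eq_getLast?_getD]
    rw [hlast, List.dropLast_concat]
    refine tchain_of _ ?_ (4 * a - 4 * s + t) (2 * a - s - 1) (s + 1 - a)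
      (2 * (a - s - 1) - (s - 1 - t)) ?_ (by omega) ?_ ?_ ⟨a, ?_⟩
    · intro b hb
      simp only [List.mem_cons, List.mem_append, List.not_mem_nil, or_false] at hb
      have := hL x (by simp)
      rcases hb with rfl | hb | rfl
      · rfl
      · exact hL b (by simp [hb])
      · omega
    · rw [cont_append] at hA hB
      simp only [cont] at hA hB ⊢
      rw [cont_append]
      simp only [cont]
      rw [cont_lin] at hA hB ⊢
      simp only [Prod.mk.injEq] at hA hB ⊢
      constructor <;> linarith
    · nlinarith
    · linear_combination -hst
    · linear_combination hst
  · cases L with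
    | nil => simp [cont] at hA; omega
    | cons x l =>
    simp only [List.head!_cons, List.tail_cons]
    refine tchain_of _ ?_ (a + 2 * s + t) (s + t - 1) (1 - s)
      (a + s - 1) ?_ (by omega) (by omega) ?_ ⟨t, ?_⟩
    · intro b hb
      simp only [List.mem_cons, List.mem_append, List.not_mem_nil, or_false] at hb
      have := hL x (by simp)
      rcases hb with rfl | hb | rfl
      · omega
      · exact hL b (by simp [hb])
      · rfl
    · simp only [cont, cont_append, Prod.mk.injEq] at hA hB ⊢
      rw [cont_lin]
      simp only
      obtain ⟨p1, p2⟩ := hA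
      obtain ⟨p3, p4⟩ := hB
      constructor
      · linear_combination 2 * p1 + p3 + 2 * p2 + p4
      · linear_combination 2 * p2 + p4
    · linear_combination -hst
    · linear_combination hst
end

section
/- Every T-chain can be obtained by starting with one of the chains [4] or [3,2,…,2,3] (with any number k ≥ 0 of intermediate 2's) and iterating finitely many times the two operations [b_1,…,b_ρ] ↦ [2, b_1,…,b_{ρ−1}, b_ρ + 1] and [b_1,…,b_ρ] ↦ [b_1 + 1, b_2,…,b_ρ, 2]. -/
/-- Chains obtainable from `[4]` or `[3,2,…,2,3]` (any number `k ≥ 0` of intermediate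
`2`'s) by iterating the operations `[b_1,…,b_ρ] ↦ [2, b_1,…,b_{ρ−1}, b_ρ + 1]` and
`[b_1,…,b_ρ] ↦ [b_1 + 1, b_2,…,b_ρ, 2]`. -/
inductive TChainGen : List ℤ → Prop
  | base4 : TChainGen [4]
  | base3 (k : ℕ) : TChainGen (3 :: (List.replicate k 2 ++ [3]))
  | stepL (L : List ℤ) : TChainGen L → TChainGen (2 :: (L.dropLast ++ [L.getLast! + 1]))
  | stepR (L : List ℤ) : TChainGen L → TChainGen ((L.head! + 1) :: (L.tail ++ [2]))

/-- The matrix product attached to a chain. -/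
def cmat : List ℤ → Matrix (Fin 2) (Fin 2) ℤ
  | [] => 1
  | b :: l => !![b, -1; 1, 0] * cmat l

lemma cmat_append (l m : List ℤ) : cmat (l ++ m) = cmat l * cmat m := by
  induction l with
  | nil => simp [cmat]
  | cons b l ih => simp [cmat, ih]

lemma cmat_single (b : ℤ) : cmat [b] = !![b, -1; 1, 0] := by simp [cmat]

lemma cmat_cons (b : ℤ) (l : List ℤ) :
    cmat (b :: l) 0 0 = b * cmat l 0 0 - cmat l 1 0 ∧
    cmat (b :: l) 0 1 = b * cmat l 0 1 - cmat l 1 1 ∧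
    cmat (b :: l) 1 0 = cmat l 0 0 ∧ cmat (b :: l) 1 1 = cmat l 0 1 := by
  refine ⟨?_, ?_, ?_, ?_⟩ <;> simp [cmat, Matrix.mul_apply, Fin.sum_univ_two] <;> ring

lemma cmat_snoc (c : ℤ) (l : List ℤ) :
    cmat (l ++ [c]) 0 0 = c * cmat l 0 0 + cmat l 0 1 ∧
    cmat (l ++ [c]) 0 1 = - cmat l 0 0 ∧
    cmat (l ++ [c]) 1 0 = c * cmat l 1 0 + cmat l 1 1 ∧
    cmat (l ++ [c]) 1 1 = - cmat l 1 0 := by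
  rw [cmat_append, cmat_single]
  refine ⟨?_, ?_, ?_, ?_⟩ <;> simp [Matrix.mul_apply, Fin.sum_univ_two] <;> ring

lemma cmat_det (l : List ℤ) :
    cmat l 0 0 * cmat l 1 1 - cmat l 0 1 * cmat l 1 0 = 1 := by
  induction l with
  | nil => simp [cmat]
  | cons b l ih =>
    obtain ⟨h1, h2, h3, h4⟩ := cmat_cons b l
    rw [h1, h2, h3, h4]
    linarith

lemma cmat_bounds (l : List ℤ) (hl : ∀ b ∈ l, 2 ≤ b) :
    0 ≤ cmat l 1 0 ∧ cmat l 1 0 + 1 ≤ cmat l 0 0 ∧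
    1 ≤ cmat l 0 0 + cmat l 0 1 ∧
    cmat l 1 0 + cmat l 1 1 ≤ cmat l 0 0 + cmat l 0 1 ∧
    cmat l 0 1 ≤ 0 ∧ cmat l 0 1 ≤ cmat l 1 1 := by
  induction l with
  | nil => simp [cmat]
  | cons b l ih =>
    obtain ⟨h1, h2, h3, h4⟩ := cmat_cons b l
    have hb : 2 ≤ b := hl b (by simp)
    obtain ⟨i1, i2, i3, i4, i5, i6⟩ := ih (fun x hx => hl x (by simp [hx]))
    rw [h1, h2, h3, h4]
    refine ⟨by linarith, by nlinarith, by nlinarith, by nlinarith, by nlinarith, by nlinarith⟩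

lemma cmat_twos (l : List ℤ) (hl : ∀ b ∈ l, 2 ≤ b) (h : cmat l 0 0 = cmat l 1 0 + 1) :
    l = List.replicate l.length 2 := by
  induction l with
  | nil => simp
  | cons b l ih =>
    obtain ⟨h1, h2, h3, h4⟩ := cmat_cons b l
    have hb : 2 ≤ b := hl b (by simp)
    have hl' : ∀ x ∈ l, 2 ≤ x := fun x hx => hl x (by simp [hx])
    obtain ⟨i1, i2, i3, i4, i5, i6⟩ := cmat_bounds l hl'
    rw [h1, h3] at h
    have hb2 : b = 2 := by
      by_contra hne
      have : 3 ≤ b := by omega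
      nlinarith
    subst hb2
    have := ih hl' (by linarith)
    simp only [List.length_cons, List.replicate_succ]
    rw [← this]

lemma hj_cmat (l : List ℤ) (hl : ∀ b ∈ l, 2 ≤ b) :
    hj (l.map (fun b : ℤ => (b : ℚ))) = (cmat l 0 0 : ℚ) / (cmat l 1 0 : ℚ) := by
  induction l with
  | nil => simp [cmat, hj]
  | cons b l ih =>
    obtain ⟨h1, h2, h3, h4⟩ := cmat_cons b l
    have hl' : ∀ x ∈ l, 2 ≤ x := fun x hx => hl x (by simp [hx])
    obtain ⟨i1, i2, i3, i4, i5, i6⟩ := cmat_bounds l hl'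
    have hN : (cmat l 0 0 : ℚ) ≠ 0 := by
      have : cmat l 0 0 ≠ 0 := by omega
      exact_mod_cast this
    rw [List.map_cons, hj, ih hl', h1, h3, one_div_div]
    push_cast
    field_simp

lemma gen_of_cmat (k : ℕ) : ∀ l : List ℤ, l.length = k → l ≠ [] → (∀ b ∈ l, 2 ≤ b) →
    cmat l 0 0 - cmat l 1 0 + cmat l 0 1 = 2 → TChainGen l := by
  induction k with
  | zero =>
    intro l h1 h2
    exact absurd (List.length_eq_zero_iff.mp h1) h2
  | succ k ih =>
    intro l hk hne hl h
    obtain ⟨a, l', rfl⟩ := List.exists_cons_of_ne_nil hne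
    rcases List.eq_nil_or_concat l' with rfl | ⟨m, c, rfl⟩
    · simp [cmat] at h
      have : a = 4 := by linarith
      subst this
      exact TChainGen.base4
    · have ha : 2 ≤ a := hl a (by simp)
      have hc : 2 ≤ c := hl c (by simp)
      have hm : ∀ x ∈ m, 2 ≤ x := fun x hx => hl x (by simp [hx])
      obtain ⟨i1, i2, i3, i4, i5, i6⟩ := cmat_bounds m hm
      have hdet := cmat_det m
      obtain ⟨a1, a2, a3, a4⟩ := cmat_cons a (m ++ [c])
      obtain ⟨c1, c2, c3, c4⟩ := cmat_snoc c m
      rw [List.concat_eq_append] at *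
      rw [a1, a2, a3, c1, c2, c3, c4] at h
      simp only [List.length_cons, List.length_append, List.length_nil] at hk
      by_cases ha2 : a = 2
      · subst ha2
        by_cases hc2 : c = 2
        · subst hc2
          exfalso
          nlinarith
        · have key : TChainGen (m ++ [c - 1]) := by
            apply ih
            · simp; omega
            · simp
            · intro x hx
              rcases List.mem_append.mp hx with hx | hx
              · exact hm x hx
              · simp at hx; omega
            · obtain ⟨d1, d2, d3, d4⟩ := cmat_snoc (c - 1) m
              rw [d1, d2, d3]
              linarith
          have := TChainGen.stepL _ key
          simpa [List.getLast!_eq_getLast?_getD] using this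
      · by_cases hc2 : c = 2
        · subst hc2
          have key : TChainGen ((a - 1) :: m) := by
            apply ih
            · simp; omega
            · simp
            · intro x hx
              rcases List.mem_cons.mp hx with hx | hx
              · omega
              · exact hm x hx
            · obtain ⟨d1, d2, d3, d4⟩ := cmat_cons (a - 1) m
              rw [d1, d2, d3]
              linarith
          have := TChainGen.stepR _ key
          simpa using this
        · obtain ⟨x, rfl⟩ : ∃ x, a = x + 3 := ⟨a - 3, by ring⟩
          obtain ⟨y, rfl⟩ : ∃ y, c = y + 3 := ⟨c - 3, by ring⟩
          have hx : 0 ≤ x := by omega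
          have hy : 0 ≤ y := by omega
          generalize hN : cmat m 0 0 = N at *
          generalize hQ : cmat m 1 0 = Q at *
          generalize hQ' : cmat m 0 1 = Q' at *
          generalize hP : cmat m 1 1 = P at *
          obtain ⟨s, rfl⟩ : ∃ s, Q = N - 1 - s := ⟨N - 1 - Q, by ring⟩
          obtain ⟨t, rfl⟩ : ∃ t, Q' = 1 + t - N := ⟨Q' + N - 1, by ring⟩
          obtain ⟨r, rfl⟩ : ∃ r, P = 2 + s + t - N - r := ⟨2 + s + t - N - P, by ring⟩
          have hs : 0 ≤ s := by linarith
          have ht : 0 ≤ t := by linarith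
          have hNr : N * r = s * t + s + t := by linarith
          have hNp : 0 < N := by linarith
          have hr : 0 ≤ r := by
            by_contra hneg
            have : N * r < 0 := mul_neg_of_pos_of_neg hNp (by linarith)
            nlinarith [mul_nonneg hs ht]
          have hsum : N * (x * y + x + y) + x * t + x + t + y * s + y + s + r = 0 := by
            linarith
          have p1 := mul_nonneg hx hy
          have p2 := mul_nonneg hx ht
          have p3 := mul_nonneg hy hs
          have p4 : 0 ≤ N * (x * y + x + y) := mul_nonneg hNp.le (by linarith)
          have hx0 : x = 0 := by linarith
          have hy0 : y = 0 := by linarith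
          have hs0 : s = 0 := by linarith
          subst hx0 hy0 hs0
          have := cmat_twos m hm (by rw [hN, hQ]; ring)
          rw [this]
          simpa using TChainGen.base3 m.length

/-- Every T-chain is obtained from `[4]` or some `[3,2,…,2,3]` by iterating the
two elementary operations. -/
theorem tchain_generated (L : List ℤ) (h : IsTChain L) : TChainGen L := by
  obtain ⟨hl, n, q, ⟨hq1, hqn, hcop, hdvd, hqne⟩, hval⟩ := h
  have hq0 : (0 : ℚ) < q := by exact_mod_cast hq1
  have hn0 : (0 : ℚ) < n := by exact_mod_cast (by omega : 0 < n)
  have hne : L ≠ [] := by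
    rintro rfl
    have : (0 : ℚ) < n / q := div_pos hn0 hq0
    rw [← hval] at this
    simp [hj] at this
  have hval' : hj (L.map (fun b : ℤ => (b : ℚ))) = (n : ℚ) / (q : ℚ) := by
    rw [← hval]
    congr 1
    simp [List.map_eq_flatMap]
  clear hval
  rename' hval' => hval
  rw [hj_cmat L hl] at hval
  obtain ⟨i1, i2, i3, i4, i5, i6⟩ := cmat_bounds L hl
  have hdet := cmat_det L
  refine gen_of_cmat _ L rfl hne hl ?_
  generalize cmat L 0 0 = N at *
  generalize cmat L 1 0 = Q at *
  generalize cmat L 0 1 = Q' at *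
  generalize cmat L 1 1 = P at *
  have hQ : 0 < Q := by
    rcases i1.lt_or_eq with h | h
    · exact h
    · exfalso
      rw [← h] at hval
      have : (0 : ℚ) < n / q := div_pos hn0 hq0
      rw [← hval] at this
      simp at this
  have hQq : (0 : ℚ) < Q := by exact_mod_cast hQ
  rw [div_eq_div_iff hQq.ne' hq0.ne'] at hval
  have hv : N * q = n * Q := by exact_mod_cast hval
  have hc1 : IsCoprime N Q := ⟨P, -Q', by linarith⟩
  have hc2 : IsCoprime (n : ℤ) (q : ℤ) := Nat.isCoprime_iff_coprime.mpr hcop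
  have d1 : N ∣ n := hc1.dvd_of_dvd_mul_right ⟨q, hv.symm⟩
  have d2 : (n : ℤ) ∣ N := hc2.dvd_of_dvd_mul_right ⟨Q, hv⟩
  have hNn : N = n := Int.dvd_antisymm (by omega) (by omega) d1 d2
  have hQe : Q = q := by
    rw [hNn] at hv
    have hn' : (n : ℤ) ≠ 0 := by omega
    exact (mul_left_cancel₀ hn' hv).symm
  have hd : N ∣ (Q + 1) ^ 2 := by
    rw [hNn, hQe]; exact_mod_cast hdvd
  have hd2 : N ∣ Q - Q' + 2 := by
    have e : Q - Q' + 2 = -Q' * (Q + 1) ^ 2 + N * (P * (Q + 2)) := by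
      linear_combination (-(Q + 2)) * hdet
    rw [e]
    exact dvd_add (hd.mul_left _) (dvd_mul_right _ _)
  obtain ⟨k, hk⟩ := hd2
  have hQN : Q + 2 ≤ N := by omega
  have k1 : 0 < k := by
    by_contra hh
    nlinarith
  have k2 : k < 2 := by
    by_contra hh
    nlinarith
  have : k = 1 := by omega
  subst this
  linarith
end

section
/- Let [b_1,…,b_ρ] be a sequence of integers with all b_i ≥ 2, and let α_1,…,α_ρ be its log discrepancies. Then [b_1,…,b_ρ] is a T-chain if and only if α_1 + α_ρ = 1. -/
/-- `α : ℕ → ℚ` records the log discrepancies `α_1,…,α_ρ` of the chain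
`[b_1,…,b_ρ]` (where `b_i = L[i-1]`): `α_0 = α_{ρ+1} = 1` and
`α_{i−1} + α_{i+1} = b_i·α_i` for `1 ≤ i ≤ ρ`. -/
def IsLogDisc (L : List ℤ) (α : ℕ → ℚ) : Prop :=
  α 0 = 1 ∧ α (L.length + 1) = 1 ∧
  ∀ (i : ℕ) (h : i < L.length),
    α i + α (i + 2) = ((L.get ⟨i, h⟩ : ℤ) : ℚ) * α (i + 1)

theorem chain_data (L : List ℤ) (hL2 : ∀ b ∈ L, 2 ≤ b) :
    ∃ n q p r : ℤ, q * p - n * r = 1 ∧ 0 ≤ q ∧ q < n ∧ 0 ≤ p ∧ 1 ≤ p - r ∧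
      1 ≤ n - p ∧ q - r ≤ n - p ∧ (L ≠ [] → 1 ≤ q ∧ 1 ≤ p) ∧
      1 / hj (List.map (fun b : ℤ => (b : ℚ)) L) = (q : ℚ) / n ∧
      ∀ α : ℕ → ℚ, (∀ (i : ℕ) (h : i < L.length),
        α i + α (i + 2) = ((L.get ⟨i, h⟩ : ℤ) : ℚ) * α (i + 1)) →
        α 0 = n * α L.length - p * α (L.length + 1) ∧
        α 1 = q * α L.length - r * α (L.length + 1) := by
  induction L with
  | nil => exact ⟨1, 0, 0, -1, by norm_num, by norm_num, by norm_num, by norm_num, by norm_num,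
      by norm_num, by norm_num, by simp, by simp [hj], by intro α _; simp⟩
  | cons b l ih =>
    obtain ⟨n, q, p, r, h1, h2, h3, h4, h5, h6, h7, -, h9, h10⟩ :=
      ih (fun c hc => hL2 c (List.mem_cons_of_mem _ hc))
    have hb : 2 ≤ b := hL2 b List.mem_cons_self
    refine ⟨b * n - q, n, b * p - r, p, by linear_combination h1, by omega, by nlinarith,
      by nlinarith, by nlinarith, by nlinarith, by nlinarith,
      fun _ => ⟨by omega, by nlinarith⟩, ?_, ?_⟩
    · have hn : (n : ℚ) ≠ 0 := by
        have : n ≠ 0 := by omega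
        exact_mod_cast this
      simp only [List.map_cons, hj]
      rw [h9]
      push_cast
      rw [show (b : ℚ) - q / n = (b * n - q) / n by field_simp, one_div_div]
    · intro α hα
      obtain ⟨ha, hb'⟩ := h10 (fun i => α (i + 1)) (fun i h => by
        have := hα (i + 1) (by simpa using h)
        simpa [add_assoc, add_comm, add_left_comm] using this)
      have h0 := hα 0 (by simp)
      simp only [List.get_eq_getElem, List.getElem_cons_zero, zero_add] at h0 ha hb'
      simp only [List.length_cons]
      push_cast
      constructor
      · have : α (1+1) = α 2 := rfl
        rw [this] at hb'
        linear_combination h0 + b * ha - hb'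
      · exact ha

/-- Let `[b_1,…,b_ρ]` (ρ ≥ 1, all `b_i ≥ 2`) have log discrepancies `α_1,…,α_ρ`.
Then `[b_1,…,b_ρ]` is a T-chain iff `α_1 + α_ρ = 1`. -/
theorem tchain_iff_log_discrepancies (L : List ℤ) (hne : L ≠ [])
    (hL2 : ∀ b ∈ L, 2 ≤ b) (α : ℕ → ℚ) (hα : IsLogDisc L α) :
    IsTChain L ↔ α 1 + α L.length = 1 := by
  obtain ⟨n, q, p, r, h1, h2, h3, h4, h5, h6, h7, h8, h9, h10⟩ := chain_data L hL2
  obtain ⟨hq, hp⟩ := h8 hne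
  obtain ⟨ha0, ha1, hrec⟩ := hα
  obtain ⟨e0, e1⟩ := h10 α hrec
  rw [ha1] at e0 e1
  rw [ha0] at e0
  have hnpos : (0 : ℚ) < n := by
    have : 0 < n := by omega
    exact_mod_cast this
  have h1' : (q : ℚ) * p - n * r = 1 := by exact_mod_cast h1
  have hsum : α 1 + α L.length = 1 ↔ q + p + 2 = n := by
    have key : (n : ℚ) * (α 1 + α L.length) = q + p + 2 := by
      linear_combination (n : ℚ) * e1 - (q + 1) * e0 + h1'
    constructor
    · intro h
      rw [h, mul_one] at key
      exact_mod_cast key.symm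
    · intro h
      have h' : (q : ℚ) + p + 2 = n := by exact_mod_cast h
      rw [h'] at key
      exact mul_left_cancel₀ hnpos.ne' (by rw [key, mul_one])
  have hhj : hj (L.map (fun b => (b : ℚ))) = (n : ℚ) / q := by
    have hm : L.map (fun b => (b : ℚ)) = List.map (fun b : ℤ => (b : ℚ)) L := by
      simp only [List.map_id', List.bind_eq_flatMap]
      exact List.flatMap_pure_eq_map _ L
    rw [hm, ← one_div_one_div (hj _), h9, one_div_div]
  have hcop : IsCoprime n q := ⟨-r, p, by linear_combination h1⟩
  rw [hsum]
  constructor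
  · rintro ⟨-, m, s, ⟨hs1, hsm, hc, hd, hne1⟩, hv⟩
    rw [hhj] at hv
    have hqQ : (q : ℚ) ≠ 0 := by
      have : q ≠ 0 := by omega
      exact_mod_cast this
    have hsQ : (s : ℚ) ≠ 0 := by
      have : s ≠ 0 := by omega
      exact_mod_cast this
    rw [div_eq_div_iff hqQ hsQ] at hv
    have hv' : n * (s : ℤ) = m * q := by exact_mod_cast hv
    have hc' : IsCoprime (m : ℤ) (s : ℤ) := Nat.isCoprime_iff_coprime.mpr hc
    have d1 : n ∣ (m : ℤ) := hcop.dvd_of_dvd_mul_right ⟨s, hv'.symm⟩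
    have d2 : (m : ℤ) ∣ n := hc'.dvd_of_dvd_mul_right ⟨q, hv'⟩
    have hnm : n = m := Int.dvd_antisymm (by omega) (by omega) d1 d2
    have hqs : q = s := by
      rw [hnm] at hv'
      exact (mul_left_cancel₀ (by omega) hv').symm
    have hdz : n ∣ (q + 1) ^ 2 := by
      rw [hnm, hqs]; exact_mod_cast hd
    obtain ⟨k, hk⟩ := hdz
    have : q + p + 2 = n * (p * k - r * (q + 2)) := by
      linear_combination p * hk - (q + 2) * h1
    generalize p * k - r * (q + 2) = t at this
    have ht1 : 0 < t := by nlinarith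
    have ht2 : t < 2 := by
      by_contra hcon
      have : n * 2 ≤ n * t := by nlinarith
      omega
    have : t = 1 := by omega
    subst this
    omega
  · intro h
    refine ⟨hL2, n.toNat, q.toNat, ⟨by omega, by omega, ?_, ?_, by omega⟩, ?_⟩
    · rw [← Nat.isCoprime_iff_coprime, Int.toNat_of_nonneg (by omega), Int.toNat_of_nonneg h2]
      exact hcop
    · zify
      rw [Int.toNat_of_nonneg (by omega), Int.toNat_of_nonneg h2]
      exact ⟨q - r, by linear_combination q * h - h1⟩
    · rw [hhj]
      have hn : ((n.toNat : ℤ) : ℚ) = n := by rw [Int.toNat_of_nonneg (by omega)]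
      have hq' : ((q.toNat : ℤ) : ℚ) = q := by rw [Int.toNat_of_nonneg h2]
      rw [← hn, ← hq', Int.cast_natCast, Int.cast_natCast]
end

section
/- For any number k ≥ 0 of intermediate 2's, the weighted fork [2 ∣ 2 ∣ 2 ∣ 2,…,2,1] — a central vertex of weight 2 joined to two single vertices of weight 2 and to the first vertex of a chain [2,…,2,1] with k vertices of weight 2 followed by one vertex of weight 1 — is parabolic. -/
/-- A weighted graph (given by its matrix `M`) is parabolic if `M` is negative
semidefinite of rank `ρ − 1`. -/
def IsParabolic {m : ℕ} (M : Matrix (Fin m) (Fin m) ℝ) : Prop :=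
  (-M).PosSemidef ∧ M.rank = m - 1

/-- The matrix of the fork `[2 ∣ 2 ∣ 2 ∣ 2,…,2,1]` with `k` intermediate `2`'s:
vertices `0` and `1` are the two single vertices of weight `2`, vertex `2` is the
central vertex of weight `2`, vertices `3,…,k+2` form the chain of `k` vertices of
weight `2`, and vertex `k+3` has weight `1`; the edges are `{0,2}`, `{1,2}` and the
path `2 — 3 — ⋯ — (k+3)`. -/
def forkMatrix (k : ℕ) : Matrix (Fin (k + 4)) (Fin (k + 4)) ℝ :=
  fun i j =>
    if i = j then (if (i : ℕ) = k + 3 then -1 else -2)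
    else if ((i : ℕ) = 0 ∧ (j : ℕ) = 2) ∨ ((j : ℕ) = 0 ∧ (i : ℕ) = 2) ∨
            ((i : ℕ) = 1 ∧ (j : ℕ) = 2) ∨ ((j : ℕ) = 1 ∧ (i : ℕ) = 2) ∨
            (2 ≤ (i : ℕ) ∧ (i : ℕ) + 1 = (j : ℕ)) ∨
            (2 ≤ (j : ℕ) ∧ (j : ℕ) + 1 = (i : ℕ))
    then 1 else 0

/-- Rows of a root system style factorisation of `-forkMatrix k`. -/
def forkB (k : ℕ) : Matrix (Fin (k + 3)) (Fin (k + 4)) ℝ :=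
  fun r i => (if (i : ℕ) = (r : ℕ) + 0 then 1 else 0) - (if (i : ℕ) = (r : ℕ) + 1 then 1 else 0)
    + (if (r : ℕ) = 1 ∧ (i : ℕ) = 0 then 1 else 0)

theorem sum_ite_shift (n a b c d : ℕ) :
    ∑ s : Fin n, (if a = (s : ℕ) + c then (1 : ℝ) else 0) * (if b = (s : ℕ) + d then 1 else 0)
      = if c ≤ a ∧ a < n + c ∧ b + c = a + d then 1 else 0 := by
  split_ifs with h
  · rw [Finset.sum_eq_single (⟨a - c, by omega⟩ : Fin n)]
    · rw [if_pos (by simp; omega), if_pos (by simp; omega)]; norm_num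
    · intro s _ hs
      rw [if_neg, zero_mul]
      intro h'
      apply hs
      ext
      simp; omega
    · simp
  · apply Finset.sum_eq_zero
    intro s _
    have := s.2
    by_cases h1 : a = (s : ℕ) + c
    · have h2 : ¬ b = (s : ℕ) + d := by omega
      rw [if_neg h2, mul_zero]
    · rw [if_neg h1, zero_mul]

theorem forkB_mul (k : ℕ) : -forkMatrix k = (forkB k).transpose * forkB k := by
  ext i j
  have hi := i.2
  have hj := j.2
  have key : ((forkB k).transpose * forkB k) i j =
      (if 0 ≤ (i:ℕ) ∧ (i:ℕ) < (k+3) + 0 ∧ (j:ℕ) + 0 = i + 0 then (1:ℝ) else 0)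
      - (if 0 ≤ (i:ℕ) ∧ (i:ℕ) < (k+3) + 0 ∧ (j:ℕ) + 0 = i + 1 then (1:ℝ) else 0)
      - (if 1 ≤ (i:ℕ) ∧ (i:ℕ) < (k+3) + 1 ∧ (j:ℕ) + 1 = i + 0 then (1:ℝ) else 0)
      + (if 1 ≤ (i:ℕ) ∧ (i:ℕ) < (k+3) + 1 ∧ (j:ℕ) + 1 = i + 1 then (1:ℝ) else 0)
      + (if (j:ℕ) = 0 then 1 else 0) * ((if (i:ℕ) = 1 then 1 else 0) - (if (i:ℕ) = 2 then 1 else 0))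
      + (if (i:ℕ) = 0 then 1 else 0) * ((if (j:ℕ) = 1 then 1 else 0) - (if (j:ℕ) = 2 then 1 else 0))
      + (if (i:ℕ) = 0 then 1 else 0) * (if (j:ℕ) = 0 then 1 else 0) := by
    simp only [← sum_ite_shift]
    have e : ∀ f : ℕ → ℝ, f 1 = ∑ s : Fin (k+3), (if (s : ℕ) = 1 then f s else 0) := by
      intro f
      rw [Finset.sum_eq_single (⟨1, by omega⟩ : Fin (k+3))]
      · simp
      · intro s _ hs
        rw [if_neg]
        intro h; apply hs; ext; simpa using h
      · simp
    have e1 := e (fun s => (if (j:ℕ) = 0 then 1 else 0) * ((if (i:ℕ) = s then 1 else 0) - (if (i:ℕ) = s+1 then 1 else 0))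
      + (if (i:ℕ) = 0 then 1 else 0) * ((if (j:ℕ) = s then 1 else 0) - (if (j:ℕ) = s+1 then 1 else 0))
      + (if (i:ℕ) = 0 then 1 else 0) * (if (j:ℕ) = 0 then 1 else 0))
    simp only [Nat.reduceAdd] at e1
    rw [add_assoc, add_assoc, ← add_assoc (_ * _), e1]
    simp only [← Finset.sum_add_distrib, ← Finset.sum_sub_distrib]
    rw [Matrix.mul_apply]
    apply Finset.sum_congr rfl
    intro s _
    simp only [Matrix.transpose_apply, forkB, add_zero]
    by_cases hs : (s : ℕ) = 1
    · simp only [hs, true_and, if_true]; ring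
    · simp only [hs, false_and, if_false]; ring
  rw [key]
  simp only [Matrix.neg_apply, forkMatrix, Fin.ext_iff]
  generalize (i : ℕ) = a at *
  generalize (j : ℕ) = b at *
  clear key
  rcases lt_trichotomy a b with h | h | h
  · have hc : (a = 0 ∧ b = 1) ∨ (a = 0 ∧ b = 2) ∨ (a = 0 ∧ 3 ≤ b) ∨ (a = 1 ∧ b = 2) ∨ (a = 1 ∧ 3 ≤ b)
        ∨ (2 ≤ a ∧ b = a + 1) ∨ (2 ≤ a ∧ a + 1 < b) := by omega
    rcases hc with ⟨h1, h2⟩ | ⟨h1, h2⟩ | ⟨h1, h2⟩ | ⟨h1, h2⟩ | ⟨h1, h2⟩ | ⟨h1, h2⟩ | ⟨h1, h2⟩ <;> grind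
  · subst h
    have hc : a = 0 ∨ a = 1 ∨ a = k + 3 ∨ (2 ≤ a ∧ a < k + 3) := by omega
    rcases hc with h1 | h1 | h1 | h1 <;> grind
  · have hc : (b = 0 ∧ a = 1) ∨ (b = 0 ∧ a = 2) ∨ (b = 0 ∧ 3 ≤ a) ∨ (b = 1 ∧ a = 2) ∨ (b = 1 ∧ 3 ≤ a)
        ∨ (2 ≤ b ∧ a = b + 1) ∨ (2 ≤ b ∧ b + 1 < a) := by omega
    rcases hc with ⟨h1, h2⟩ | ⟨h1, h2⟩ | ⟨h1, h2⟩ | ⟨h1, h2⟩ | ⟨h1, h2⟩ | ⟨h1, h2⟩ | ⟨h1, h2⟩ <;> grind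

theorem forkB_rank (k : ℕ) : (forkB k).rank = k + 3 := by
  apply le_antisymm
  · simpa using (forkB k).rank_le_height
  · let C := (forkB k).submatrix id (Fin.succAbove (1 : Fin (k + 4)))
    have hval : ∀ s : Fin (k+3), ((Fin.succAbove (1 : Fin (k + 4)) s : Fin (k+4)) : ℕ)
        = if (s : ℕ) = 0 then 0 else (s : ℕ) + 1 := by
      intro s
      simp only [Fin.succAbove, Fin.lt_def]
      split_ifs <;> simp_all
    have hdet : C.det ≠ 0 := by
      rw [Matrix.det_of_isLowerTriangular]
      · rw [Finset.prod_ne_zero_iff]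
        intro s _
        simp only [C, Matrix.submatrix_apply, forkB, hval, id]
        split_ifs <;> grind
      · intro r s hrs
        have hrs' : (r : ℕ) < s := by simpa using hrs
        simp only [C, Matrix.submatrix_apply, forkB, hval, id]
        split_ifs <;> grind
    have hC : C.rank = k + 3 := by
      rw [Matrix.rank_of_isUnit]
      · simp
      · rw [Matrix.isUnit_iff_isUnit_det]; exact hdet.isUnit
    exact hC.symm.le.trans (Matrix.rank_submatrix_le _ _ _)

/-- For every `k ≥ 0`, the fork `[2 ∣ 2 ∣ 2 ∣ 2,…,2,1]` (with `k` intermediate `2`'s)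
is parabolic. -/
theorem fork_parabolic (k : ℕ) : IsParabolic (forkMatrix k) := by
  constructor
  · rw [forkB_mul]
    have := Matrix.posSemidef_conjTranspose_mul_self (forkB k)
    rwa [Matrix.conjTranspose_eq_transpose_of_trivial] at this
  · have h : (-forkMatrix k).rank = k + 3 := by
      rw [forkB_mul, Matrix.rank_transpose_mul_self, forkB_rank]
    have h2 : (-forkMatrix k).rank = (forkMatrix k).rank := by
      have h3 := Matrix.rank_smul_of_mem_nonZeroDivisors (c := (-1 : ℝ)) (forkMatrix k) (by simp)
      rwa [neg_one_smul] at h3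
    omega
end

section
/- Let [a_1,…,a_r] be a T-chain with Hirzebruch–Jung value n/q. Then Σ_{i=1}^{r} a_i = 3r + 2 − β(n/q); here β(n/q) is a positive integer. -/
/-- The matrix of one continued fraction step. -/
def hjA (b : ℤ) : Matrix (Fin 2) (Fin 2) ℤ := !![b, -1; 1, 0]

/-- The product matrix of a chain. -/
def hjM (L : List ℤ) : Matrix (Fin 2) (Fin 2) ℤ := (L.map hjA).prod

/-- numerator -/
def cN (L : List ℤ) : ℤ := hjM L 0 0
/-- denominator -/
def cQ (L : List ℤ) : ℤ := hjM L 1 0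
/-- inverse of the denominator -/
def cR (L : List ℤ) : ℤ := - hjM L 0 1
/-- inner continuant -/
def cP (L : List ℤ) : ℤ := - hjM L 1 1

theorem c_nil : cN [] = 1 ∧ cQ [] = 0 ∧ cR [] = 0 ∧ cP [] = -1 := by
  simp [cN, cQ, cR, cP, hjM]

theorem c_cons (b : ℤ) (L : List ℤ) :
    cN (b :: L) = b * cN L - cQ L ∧ cQ (b :: L) = cN L ∧
    cR (b :: L) = b * cR L - cP L ∧ cP (b :: L) = cR L := by
  simp only [cN, cQ, cR, cP, hjM, List.map_cons, List.prod_cons, Matrix.mul_apply,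
    Fin.sum_univ_two]
  simp [hjA]
  constructor <;> ring

theorem c_append (L : List ℤ) (c : ℤ) :
    cN (L ++ [c]) = c * cN L - cR L ∧ cQ (L ++ [c]) = c * cQ L - cP L ∧
    cR (L ++ [c]) = cN L ∧ cP (L ++ [c]) = cQ L := by
  simp only [cN, cQ, cR, cP, hjM, List.map_append, List.prod_append, Matrix.mul_apply,
    Fin.sum_univ_two]
  simp [hjA]
  constructor <;> ring

theorem c_reverse (L : List ℤ) :
    cN L.reverse = cN L ∧ cQ L.reverse = cR L ∧ cR L.reverse = cQ L ∧ cP L.reverse = cP L := by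
  induction L with
  | nil => simp [c_nil]
  | cons b L ih =>
    obtain ⟨h1, h2, h3, h4⟩ := ih
    rw [List.reverse_cons]
    obtain ⟨e1, e2, e3, e4⟩ := c_append L.reverse b
    obtain ⟨f1, f2, f3, f4⟩ := c_cons b L
    rw [e1, e2, e3, e4, f1, f2, f3, f4, h1, h2, h3, h4]
    simp

theorem c_det (L : List ℤ) : cQ L * cR L - cN L * cP L = 1 := by
  induction L with
  | nil => simp [c_nil]
  | cons b L ih =>
    obtain ⟨f1, f2, f3, f4⟩ := c_cons b L
    rw [f1, f2, f3, f4]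
    linarith

theorem c_inv (L : List ℤ) (h : ∀ a ∈ L, 2 ≤ a) :
    0 ≤ cR L ∧ -1 ≤ cP L ∧ cP L < cR L ∧ cQ L < cN L ∧ cQ L - cP L ≤ cN L - cR L ∧
      1 ≤ cQ L - cP L := by
  induction L with
  | nil => simp [c_nil]
  | cons b L ih =>
    obtain ⟨h1, h2, h3, h4, h5, h6⟩ := ih (fun a ha => h a (List.mem_cons_of_mem _ ha))
    have hb : 2 ≤ b := h b (by simp)
    obtain ⟨f1, f2, f3, f4⟩ := c_cons b L
    rw [f1, f2, f3, f4]
    refine ⟨?_, ?_, ?_, ?_, ?_, ?_⟩ <;> nlinarith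

theorem c_Q_eq_zero (L : List ℤ) (h : ∀ a ∈ L, 2 ≤ a) (h0 : cQ L = 0) : L = [] := by
  cases L with
  | nil => rfl
  | cons b L =>
    have := c_inv L (fun a ha => h a (List.mem_cons_of_mem _ ha))
    rw [(c_cons b L).2.1] at h0
    omega

theorem hj_eq (L : List ℤ) (h : ∀ a ∈ L, 2 ≤ a) :
    hj (L.map (fun a : ℤ => (a : ℚ))) = (cN L : ℚ) / (cQ L : ℚ) := by
  induction L with
  | nil => simp [c_nil, hj]
  | cons b L ih =>
    have hL := fun a ha => h a (List.mem_cons_of_mem _ ha)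
    have := c_inv L hL
    obtain ⟨f1, f2, -, -⟩ := c_cons b L
    have hn : (cN L : ℚ) ≠ 0 := by
      have : cN L ≠ 0 := by omega
      exact_mod_cast this
    rw [List.map_cons, hj, ih hL, f1, f2]
    push_cast
    rw [one_div_div]
    field_simp

theorem twos (L : List ℤ) (h : ∀ a ∈ L, 2 ≤ a) (k : ℤ) (hk : 1 ≤ k)
    (hn : cN L = 2 * k + 1) (hq : cQ L = 2 * k - 1) :
    L.sum = 2 * (L.length : ℤ) + 1 ∧ (L.length : ℤ) = k := by
  induction L generalizing k with
  | nil => simp [c_nil] at hq; omega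
  | cons b L ih =>
    have hL := fun a ha => h a (List.mem_cons_of_mem _ ha)
    have hb : 2 ≤ b := h b (by simp)
    have hi := c_inv L hL
    obtain ⟨f1, f2, -, -⟩ := c_cons b L
    rw [f2] at hq
    rw [f1, hq] at hn
    rcases eq_or_lt_of_le hk with hk1 | hk1
    · subst hk1
      have h0 : cQ L = 0 := by omega
      have := c_Q_eq_zero L hL h0
      subst this
      simp
      omega
    · have hb2 : b = 2 := by
        by_contra hne
        have : 3 ≤ b := by omega
        nlinarith
      subst hb2
      have := ih hL (k - 1) (by omega) (by omega) (by omega)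
      simp only [List.sum_cons, List.length_cons]
      push_cast
      omega

theorem base (L : List ℤ) (h : ∀ a ∈ L, 2 ≤ a) (d : ℤ) (hd : 1 ≤ d)
    (hn : cN L = 4 * d) (hq : cQ L = 2 * d - 1) :
    L.sum = 3 * (L.length : ℤ) + 2 - d := by
  cases L with
  | nil => simp [c_nil] at hq; omega
  | cons b L =>
    have hL := fun a ha => h a (List.mem_cons_of_mem _ ha)
    have hb : 2 ≤ b := h b (by simp)
    have hi := c_inv L hL
    obtain ⟨f1, f2, -, -⟩ := c_cons b L
    rw [f2] at hq
    rw [f1, hq] at hn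
    rcases eq_or_lt_of_le hd with hd1 | hd1
    · subst hd1
      have h0 : cQ L = 0 := by omega
      have := c_Q_eq_zero L hL h0
      subst this
      simp
      omega
    · have hb3 : b = 3 := by
        have h1 : b < 4 := by
          by_contra hne
          have : 4 ≤ b := by omega
          nlinarith
        have h2 : b ≠ 2 := by rintro rfl; omega
        omega
      subst hb3
      have := twos L hL (d - 1) (by omega) (by omega) (by omega)
      simp only [List.sum_cons, List.length_cons]
      push_cast
      omega

/-- The main claim for chains of length `k`. -/
def Claim (k : ℕ) : Prop :=
  ∀ L : List ℤ, L.length = k → (∀ a ∈ L, 2 ≤ a) → ∀ d m a : ℤ, 1 ≤ d → 1 ≤ a → a < m →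
    IsCoprime a m → cN L = d * m ^ 2 → cQ L = d * m * a - 1 → cR L = d * m * (m - a) - 1 →
    L.sum = 3 * (L.length : ℤ) + 2 - d

theorem step (k : ℕ) (ih : ∀ j < k, Claim j) (L : List ℤ) (hlen : L.length = k)
    (h : ∀ a ∈ L, 2 ≤ a) (d m a : ℤ) (hd : 1 ≤ d) (ha : 1 ≤ a) (ham : a < m)
    (hco : IsCoprime a m) (hn : cN L = d * m ^ 2) (hq : cQ L = d * m * a - 1)
    (hr : cR L = d * m * (m - a) - 1) (h2 : m < 2 * a) :
    L.sum = 3 * (L.length : ℤ) + 2 - d := by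
  have hm : 3 ≤ m := by omega
  have hdm : 3 ≤ d * m := by nlinarith
  have hp : cP L = d * a * (m - a) - 1 := by
    have hdet := c_det L
    rw [hn, hq, hr] at hdet
    have hne : d * m ^ 2 ≠ 0 := by positivity
    apply mul_left_cancel₀ hne
    linear_combination -hdet
  cases L with
  | nil => rw [c_nil.1] at hn; nlinarith
  | cons b L =>
    have hL := fun a ha => h a (List.mem_cons_of_mem _ ha)
    have hb : 2 ≤ b := h b (by simp)
    have hi := c_inv L hL
    obtain ⟨f1, f2, f3, f4⟩ := c_cons b L
    rw [f2] at hq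
    have hb2 : b = 2 := by
      by_contra hne
      have hb3 : 3 ≤ b := by omega
      rw [f1] at hn
      have e1 : 2 * cN L < d * m ^ 2 := by nlinarith
      rw [hq] at e1
      have e2 : d * m * 1 ≤ d * m * (2 * a - m) :=
        mul_le_mul_of_nonneg_left (by omega) (by omega)
      nlinarith
    subst hb2
    rcases List.eq_nil_or_concat L with rfl | ⟨N, c, rfl⟩
    · rw [f1, c_nil.1, c_nil.2.1] at hn
      nlinarith
    · rw [List.concat_eq_append] at *
      have hN : ∀ x ∈ N, 2 ≤ x := fun x hx => hL x (by simp [hx])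
      have hc : 2 ≤ c := hL c (by simp)
      have hiN := c_inv N hN
      obtain ⟨g1, g2, g3, g4⟩ := c_append N c
      rw [f3, g3, g4] at hr
      rw [f4, g3] at hp
      rw [f1, g1, g2] at hn
      rw [g1] at hq
      have hc3 : 3 ≤ c := by
        by_contra hne
        have hc2 : c = 2 := by omega
        subst hc2
        have e2 : d * m * 1 ≤ d * m * (2 * a - m) :=
          mul_le_mul_of_nonneg_left (by omega) (by omega)
        nlinarith
      obtain ⟨k1, k2, k3, k4⟩ := c_append N (c - 1)
      have := ih (N ++ [c - 1]).length (by rw [← hlen]; simp) (N ++ [c - 1]) rfl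
        (by
          intro x hx
          rcases List.mem_append.1 hx with hx | hx
          · exact hN x hx
          · simp at hx; omega) d a (2 * a - m) hd (by omega) (by omega)
        (by
          obtain ⟨u, v, huv⟩ := hco
          exact ⟨-v, u + 2 * v, by linear_combination huv⟩)
        (by rw [k1]; linear_combination hq - hp)
        (by rw [k2]; linear_combination 2 * hq - hn - 2 * hp + hr)
        (by rw [k3]; linear_combination hp)
      simp only [List.sum_cons, List.length_cons, List.sum_append, List.length_append,
        List.sum_nil, List.length_nil] at this ⊢
      push_cast at this ⊢
      omega

theorem claim (k : ℕ) : Claim k := by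
  induction k using Nat.strong_induction_on with
  | _ k ih =>
    intro L hlen h d m a hd ha ham hco hn hq hr
    rcases lt_trichotomy m (2 * a) with h2 | h2 | h2
    · exact step k ih L hlen h d m a hd ha ham hco hn hq hr h2
    · have ha1 : a = 1 := by
        have : IsUnit a := hco.isUnit_of_dvd' dvd_rfl ⟨2, by rw [h2]; ring⟩
        rcases Int.isUnit_iff.1 this with h | h <;> omega
      subst ha1
      subst h2
      exact base L h d hd (by rw [hn]; ring) (by rw [hq]; ring)
    · obtain ⟨r1, r2, r3, r4⟩ := c_reverse L
      have := step k ih L.reverse (by simpa using hlen) (fun x hx => h x (by simpa using hx))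
        d m (m - a) hd (by omega) (by omega)
        (by
          obtain ⟨u, v, huv⟩ := hco
          exact ⟨-u, u + v, by linear_combination huv⟩)
        (by rw [r1, hn]) (by rw [r2, hr]) (by rw [r3, hq]; ring) (by omega)
      simpa using this

/-- Let `[a_1,…,a_r]` be a T-chain with Hirzebruch–Jung value `n/q`. Then
`Σ a_i = 3r + 2 − β(n/q)`, and `β(n/q)` is a positive integer. -/
theorem tchain_sum (L : List ℤ) (n q : ℕ) (hL2 : ∀ a ∈ L, 2 ≤ a)
    (hT : IsTFraction n q)
    (hval : hj (L.map (fun a => (a : ℚ))) = (n : ℚ) / (q : ℚ)) :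
    ∃ β : ℕ, 0 < β ∧ (β : ℚ) = Tbeta n q ∧
      L.sum = 3 * (L.length : ℤ) + 2 - (β : ℤ) := by
  obtain ⟨hq1, hqn, hco, hdiv, hne⟩ := hT
  -- arithmetic of n and q
  have hgpos : 0 < Nat.gcd n (q + 1) := Nat.gcd_pos_of_pos_right _ (by omega)
  obtain ⟨g, m, a, hg, hma, hnm, hqa⟩ : ∃ g m a : ℕ, 0 < g ∧ Nat.Coprime m a ∧
      n = m * g ∧ q + 1 = a * g := by
    obtain ⟨m, a, h1, h2, h3⟩ := Nat.exists_coprime n (q + 1)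
    exact ⟨_, m, a, hgpos, h1, h2, h3⟩
  have hgg : Nat.gcd n (q + 1) = g := by
    rw [hnm, hqa, Nat.gcd_mul_right, hma.gcd_eq_one, one_mul]
  have hmg : m ∣ g := by
    rw [hnm, hqa] at hdiv
    have h1 : m * g ∣ (a ^ 2 * g) * g := by
      convert hdiv using 1; ring
    have h2 : m ∣ a ^ 2 * g := Nat.dvd_of_mul_dvd_mul_right hg h1
    exact (Nat.Coprime.pow_right 2 hma).dvd_of_dvd_mul_left h2
  obtain ⟨d, rfl⟩ := hmg
  have hm0 : 0 < m := Nat.pos_of_mul_pos_right hg |> fun _ => by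
    rcases Nat.eq_zero_or_pos m with h | h
    · subst h; simp at hg
    · exact h
  have hd0 : 0 < d := by
    rcases Nat.eq_zero_or_pos d with h | h
    · subst h; simp at hg
    · exact h
  have ha0 : 0 < a := by
    rcases Nat.eq_zero_or_pos a with h | h
    · subst h; simp at hqa
    · exact h
  have ham : a < m := by
    have : a * (m * d) < m * (m * d) := by rw [← hqa, ← hnm]; omega
    exact lt_of_mul_lt_mul_right this (Nat.zero_le _)
  refine ⟨d, hd0, ?_, ?_⟩
  · rw [Tbeta, Tg, hgg, hnm]
    have : (m : ℚ) ≠ 0 := by exact_mod_cast hm0.ne'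
    have : (d : ℚ) ≠ 0 := by exact_mod_cast hd0.ne'
    push_cast
    field_simp
  · have hmap : hj (L.map (fun a => (a : ℚ))) = hj (L.map (fun a : ℤ => (a : ℚ))) := by
      congr 1
      simp [List.map_eq_flatMap]
    rw [hmap, hj_eq L hL2] at hval
    have hinv := c_inv L hL2
    have hdet := c_det L
    have hq0 : (q : ℚ) ≠ 0 := by exact_mod_cast (by omega : q ≠ 0)
    have hn0 : (n : ℚ) ≠ 0 := by exact_mod_cast (by omega : n ≠ 0)
    have hQ0 : (cQ L : ℚ) ≠ 0 := by
      intro h0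
      rw [h0, div_zero] at hval
      exact (div_ne_zero hn0 hq0) hval.symm
    have hcross : cN L * q = n * cQ L := by
      rw [div_eq_div_iff hQ0 hq0] at hval
      exact_mod_cast hval
    have hcoZ : IsCoprime (n : ℤ) (q : ℤ) := Nat.isCoprime_iff_coprime.2 hco
    have hcoL : IsCoprime (cN L) (cQ L) := ⟨-cP L, cR L, by linear_combination hdet⟩
    have hN : cN L = n := by
      apply Int.dvd_antisymm (by omega) (by omega)
      · exact hcoL.dvd_of_dvd_mul_right ⟨q, hcross.symm⟩
      · exact hcoZ.dvd_of_dvd_mul_right ⟨cQ L, hcross⟩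
    have hQ : cQ L = q := by
      rw [hN] at hcross
      exact (mul_left_cancel₀ (by omega : (n : ℤ) ≠ 0) hcross).symm
    have hnZ : (n : ℤ) = d * m ^ 2 := by rw [hnm]; push_cast; ring
    have hqZ : (q : ℤ) = d * m * a - 1 := by
      have : ((q + 1 : ℕ) : ℤ) = ((a * (m * d) : ℕ) : ℤ) := by rw [hqa]
      push_cast at this
      linear_combination this
    have hamZ : (a : ℤ) < m := by exact_mod_cast ham
    have haZ : (1 : ℤ) ≤ a := by exact_mod_cast ha0
    have hdZ : (1 : ℤ) ≤ d := by exact_mod_cast hd0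
    have hR : cR L = d * m * (m - a) - 1 := by
      have h1 : (n : ℤ) ∣ q * (cR L - (d * m * (m - a) - 1)) := by
        refine ⟨cP L + 1 - d * a * (m - a), ?_⟩
        rw [hN, hQ] at hdet
        have : (q : ℤ) * (d * m * (m - a) - 1) = n * (d * a * (m - a) - 1) + 1 := by
          rw [hqZ, hnZ]; ring
        linear_combination hdet - this
      have h2 := hcoZ.dvd_of_dvd_mul_left h1
      have hdm : (2 : ℤ) ≤ d * m := by nlinarith
      have h3 : (0 : ℤ) ≤ d * m * (m - a) - 1 := by nlinarith
      have h4 : (d : ℤ) * m * (m - a) - 1 < n := by rw [hnZ]; nlinarith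
      have h5 := Int.eq_zero_of_abs_lt_dvd h2 (by rw [abs_lt]; constructor <;> omega)
      omega
    exact claim L.length L rfl hL2 d m a hdZ haZ hamZ
      (Nat.isCoprime_iff_coprime.2 hma.symm) (by rw [hN, hnZ]) (by rw [hQ, hqZ]) hR
end

section
/- Let [b_1,…,b_ρ] be a T-chain with Hirzebruch–Jung value n/q, and let n'/q' (in lowest terms, n' > q' ≥ 1) be the Hirzebruch–Jung value of the T-chain [2, b_1,…,b_{ρ−1}, b_ρ + 1] (respectively of [b_1 + 1, b_2,…,b_ρ, 2]). Then β(n'/q') = β(n/q). -/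
/-- Action of the continued fraction matrices on integer vectors. -/
def hjAct : List ℤ → ℤ → ℤ → ℤ × ℤ
  | [], x, y => (x, y)
  | b :: l, x, y => (b * (hjAct l x y).1 - (hjAct l x y).2, (hjAct l x y).1)

lemma hjAct_append (l t : List ℤ) (x y : ℤ) :
    hjAct (l ++ t) x y = hjAct l (hjAct t x y).1 (hjAct t x y).2 := by
  induction l with
  | nil => simp [hjAct]
  | cons b l ih => simp [hjAct, ih]

lemma hjAct_lin (l : List ℤ) (c e x y z w : ℤ) :
    (hjAct l (c * x + e * z) (c * y + e * w)).1 = c * (hjAct l x y).1 + e * (hjAct l z w).1 ∧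
    (hjAct l (c * x + e * z) (c * y + e * w)).2 = c * (hjAct l x y).2 + e * (hjAct l z w).2 := by
  induction l with
  | nil => simp [hjAct]
  | cons b l ih =>
    simp only [hjAct]
    rw [ih.1, ih.2]
    exact ⟨by ring, rfl⟩

lemma hjAct_bounds (l : List ℤ) (h : ∀ a ∈ l, 2 ≤ a) :
    0 ≤ (hjAct l 1 0).2 ∧ (hjAct l 1 0).2 < (hjAct l 1 0).1 ∧
    0 ≤ (hjAct l 0 (-1)).1 ∧ (hjAct l 0 (-1)).2 < (hjAct l 0 (-1)).1 ∧
    1 ≤ (hjAct l 1 0).2 - (hjAct l 0 (-1)).2 ∧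
    (hjAct l 1 0).2 - (hjAct l 0 (-1)).2 ≤ (hjAct l 1 0).1 - (hjAct l 0 (-1)).1 ∧
    (hjAct l 0 (-1)).1 * (hjAct l 1 0).2 - (hjAct l 1 0).1 * (hjAct l 0 (-1)).2 = 1 := by
  induction l with
  | nil => simp [hjAct]
  | cons b l ih =>
    obtain ⟨h1, h2, h3, h4, h5, h6, h7⟩ := ih (fun a ha => h a (by simp [ha]))
    have hb : 2 ≤ b := h b (by simp)
    simp only [hjAct]
    generalize (hjAct l 1 0).1 = n at *
    generalize (hjAct l 1 0).2 = q at *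
    generalize (hjAct l 0 (-1)).1 = p at *
    generalize (hjAct l 0 (-1)).2 = r at *
    refine ⟨by omega, by nlinarith, by nlinarith, by nlinarith, by omega, by nlinarith, ?_⟩
    linear_combination h7

lemma hj_eq_act (l : List ℤ) (h : ∀ a ∈ l, 2 ≤ a) :
    hj (l.map (fun a : ℤ => (a : ℚ))) = ((hjAct l 1 0).1 : ℚ) / ((hjAct l 1 0).2 : ℚ) := by
  induction l with
  | nil => simp [hjAct, hj]
  | cons b l ih =>
    have hl : ∀ a ∈ l, 2 ≤ a := fun a ha => h a (by simp [ha])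
    obtain ⟨h1, h2, -⟩ := hjAct_bounds l hl
    have hn : ((hjAct l 1 0).1 : ℚ) ≠ 0 := by
      have : (hjAct l 1 0).1 ≠ 0 := by omega
      exact_mod_cast this
    simp only [List.map_cons, hj, hjAct, ih hl]
    push_cast
    rw [one_div_div]
    field_simp

lemma hj_unique_s17 (l : List ℤ) (h : ∀ a ∈ l, 2 ≤ a) (n q : ℕ) (hq : 1 ≤ q) (hn : q < n)
    (hc : Nat.Coprime n q) (hv : hj (l.map (fun a : ℤ => (a : ℚ))) = (n : ℚ) / (q : ℚ)) :
    (hjAct l 1 0).1 = n ∧ (hjAct l 1 0).2 = q := by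
  rw [hj_eq_act l h] at hv
  obtain ⟨h1, h2, -, -, -, -, h7⟩ := hjAct_bounds l h
  have hcop : IsCoprime (hjAct l 1 0).1 (hjAct l 1 0).2 :=
    ⟨-(hjAct l 0 (-1)).2, (hjAct l 0 (-1)).1, by linear_combination h7⟩
  generalize (hjAct l 1 0).1 = N at *
  generalize (hjAct l 1 0).2 = Q at *
  have hqq : (q : ℚ) ≠ 0 := by positivity
  have hnn : (n : ℚ) ≠ 0 := by
    have : n ≠ 0 := by omega
    exact_mod_cast this
  have hQ : (Q : ℚ) ≠ 0 := by
    intro h0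
    rw [h0, div_zero] at hv
    exact (div_ne_zero hnn hqq) hv.symm
  rw [div_eq_div_iff hQ hqq] at hv
  have hv' : N * q = n * Q := by exact_mod_cast hv
  have hc' : IsCoprime (n : ℤ) (q : ℤ) := Nat.isCoprime_iff_coprime.mpr hc
  have d1 : N ∣ n := hcop.dvd_of_dvd_mul_right ⟨q, hv'.symm⟩
  have d2 : (n : ℤ) ∣ N := hc'.dvd_of_dvd_mul_right ⟨Q, hv'⟩
  have e : N = n := Int.dvd_antisymm (by omega) (by omega) d1 d2
  refine ⟨e, ?_⟩
  rw [e] at hv'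
  have : (n : ℤ) ≠ 0 := by omega
  exact (mul_left_cancel₀ this hv').symm

lemma Tbeta_of (n q : ℕ) (d m a : ℤ) (hd : 0 < d) (hm : 0 < m) (hc : IsCoprime m a)
    (hn : (n : ℤ) = d * m ^ 2) (hq : (q : ℤ) + 1 = d * m * a) : Tbeta n q = d := by
  have hg : ((Tg n q : ℕ) : ℤ) = d * m := by
    have h1 : ((Tg n q : ℕ) : ℤ) = Int.gcd (d * m * m) (d * m * a) := by
      have e1 : d * m * m = ((n : ℕ) : ℤ) := by rw [hn]; ring
      have e2 : d * m * a = ((q + 1 : ℕ) : ℤ) := by rw [← hq]; push_cast; ring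
      rw [e1, e2, Int.gcd_natCast_natCast]; rfl
    rw [h1, Int.gcd_mul_left, Int.isCoprime_iff_gcd_eq_one.mp hc, mul_one]
    exact Int.natAbs_of_nonneg (by positivity)
  have hg' : ((Tg n q : ℕ) : ℚ) = d * m := by exact_mod_cast hg
  have hn' : (n : ℚ) = d * m ^ 2 := by exact_mod_cast hn
  have : (d : ℚ) ≠ 0 := by exact_mod_cast hd.ne'
  have : (m : ℚ) ≠ 0 := by exact_mod_cast hm.ne'
  rw [Tbeta, hg', hn']
  field_simp

lemma TFraction_form (n q : ℕ) (hT : IsTFraction n q) : ∃ d m a : ℤ, 0 < d ∧ 0 < m ∧ 0 < a ∧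
    IsCoprime m a ∧ (n : ℤ) = d * m ^ 2 ∧ (q : ℤ) + 1 = d * m * a := by
  obtain ⟨h1, h2, h3, h4, h5⟩ := hT
  obtain ⟨g, m, a, hg, hc, hn, hq⟩ := Nat.exists_coprime' (m := n) (n := q + 1)
    (Nat.gcd_pos_of_pos_right _ (by omega))
  have hm : m ∣ g := by
    rw [hq, hn] at h4
    have : g * m ∣ g * (g * a ^ 2) := by convert h4 using 1 <;> ring
    exact (Nat.Coprime.pow_right 2 hc).dvd_of_dvd_mul_right (Nat.dvd_of_mul_dvd_mul_left hg this)
  obtain ⟨d, rfl⟩ := hm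
  have hm0 : 0 < m := Nat.pos_of_mul_pos_right hg
  have hd0 : 0 < d := Nat.pos_of_mul_pos_left hg
  have ha : 0 < a := by
    rcases Nat.eq_zero_or_pos a with h | h
    · simp [h] at hq
    · exact h
  refine ⟨d, m, a, by exact_mod_cast hd0, by exact_mod_cast hm0, by exact_mod_cast ha,
    Nat.isCoprime_iff_coprime.mpr hc, ?_, ?_⟩
  · rw [hn]; push_cast; ring
  · have : ((q + 1 : ℕ) : ℤ) = ((a * (m * d) : ℕ) : ℤ) := by rw [hq]
    push_cast at this
    rw [this]; ring

/-- The list coercion used in the statement is the entrywise cast. -/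
lemma coe_list (l : List ℤ) :
    l.map (fun a => (a : ℚ)) = List.map (fun a : ℤ => (a : ℚ)) l := by
  simp [List.map_eq_flatMap]

/-- Let `[b_1,…,b_ρ]` be a T-chain with Hirzebruch–Jung value `n/q`, and let
`n₁/q₁` (in lowest terms, `n₁ > q₁ ≥ 1`) be the Hirzebruch–Jung value of
`[2, b_1,…,b_{ρ−1}, b_ρ + 1]` and `n₂/q₂` (in lowest terms, `n₂ > q₂ ≥ 1`) that of
`[b_1 + 1, b_2,…,b_ρ, 2]`. Then `β(n₁/q₁) = β(n/q)` and `β(n₂/q₂) = β(n/q)`. -/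
theorem tchain_steps_beta (L : List ℤ) (n q n₁ q₁ n₂ q₂ : ℕ)
    (hL2 : ∀ a ∈ L, 2 ≤ a) (hT : IsTFraction n q)
    (hval : hj (L.map (fun a => (a : ℚ))) = (n : ℚ) / (q : ℚ))
    (hq₁ : 1 ≤ q₁) (hq₁n : q₁ < n₁) (hcop₁ : Nat.Coprime n₁ q₁)
    (hval₁ : hj ((2 :: (L.dropLast ++ [L.getLast! + 1])).map (fun a => (a : ℚ)))
      = (n₁ : ℚ) / (q₁ : ℚ))
    (hq₂ : 1 ≤ q₂) (hq₂n : q₂ < n₂) (hcop₂ : Nat.Coprime n₂ q₂)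
    (hval₂ : hj (((L.head! + 1) :: (L.tail ++ [2])).map (fun a => (a : ℚ)))
      = (n₂ : ℚ) / (q₂ : ℚ)) :
    Tbeta n₁ q₁ = Tbeta n q ∧ Tbeta n₂ q₂ = Tbeta n q := by
  rw [coe_list] at hval hval₁ hval₂
  have hne : L ≠ [] := by
    rintro rfl
    obtain ⟨h1, h2, -⟩ := hT
    have a1 : (n : ℚ) ≠ 0 := by
      have : n ≠ 0 := by omega
      exact_mod_cast this
    have a2 : (q : ℚ) ≠ 0 := by
      have : q ≠ 0 := by omega
      exact_mod_cast this
    simp only [List.map_nil, hj] at hval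
    exact div_ne_zero a1 a2 hval.symm
  have hT' := hT
  obtain ⟨t1, t2, t3, t4, t5⟩ := hT'
  obtain ⟨d, m, a, hd, hm, ha, hc, hn, hq⟩ := TFraction_form n q hT
  obtain ⟨eN, eQ⟩ := hj_unique_s17 L hL2 n q t1 t2 t3 hval
  obtain ⟨B1, B2, B3, B4, B5, B6, B7⟩ := hjAct_bounds L hL2
  rw [Tbeta_of n q d m a hd hm hc hn hq]
  -- the entry p of the matrix
  have hpq : (hjAct L 0 (-1)).1 + q + 2 = n := by
    have hdv : (n : ℤ) ∣ (q + (hjAct L 0 (-1)).1 + 2) := by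
      have hcz : IsCoprime (n : ℤ) (q : ℤ) := Nat.isCoprime_iff_coprime.mpr t3
      apply hcz.dvd_of_dvd_mul_left
      have h4 : (n : ℤ) ∣ ((q : ℤ) + 1) ^ 2 := by exact_mod_cast t4
      obtain ⟨k, hk⟩ := h4
      rw [eN, eQ] at B7
      exact ⟨k + (hjAct L 0 (-1)).2, by linear_combination hk + B7⟩
    obtain ⟨k, hk⟩ := hdv
    rw [eN, eQ] at *
    have k0 : 0 < k := by
      by_contra hcon
      nlinarith
    have k2 : k < 2 := by
      by_contra hcon
      have : (n : ℤ) * 2 ≤ n * k := by nlinarith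
      omega
    have : k = 1 := by omega
    subst this
    linarith
  have hp : (hjAct L 0 (-1)).1 = d * m * (m - a) - 1 := by
    linear_combination hpq + hn - hq
  have hr : (hjAct L 0 (-1)).2 = d * a * (m - a) - 1 := by
    rw [eN, eQ, hp] at B7
    have hn0 : (n : ℤ) ≠ 0 := by omega
    have hq' : (q : ℤ) = d * m * a - 1 := by linarith
    apply mul_left_cancel₀ hn0
    rw [hq'] at B7
    linear_combination -B7 - (d * a * (m - a) - 1) * hn
  have hma : a < m := by
    have : 0 ≤ d * m * (m - a) - 1 := by rw [← hp]; exact B3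
    by_contra hcon
    have : d * m * (m - a) ≤ 0 := mul_nonpos_of_nonneg_of_nonpos (by positivity) (by omega)
    omega
  constructor
  · obtain ⟨l, b, rfl⟩ : ∃ l b, L = l ++ [b] :=
      ⟨L.dropLast, L.getLast hne, (List.dropLast_append_getLast hne).symm⟩
    have hgl : (l ++ [b]).getLast! = b := by
      rw [List.getLast!_eq_getLast?_getD]; simp
    rw [hgl, List.dropLast_concat] at hval₁
    obtain ⟨e1, e2⟩ := hj_unique_s17 (2 :: (l ++ [b + 1])) (by
      intro x hx
      simp only [List.mem_cons, List.mem_append, List.not_mem_nil, or_false] at hx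
      have hb := hL2 b (by simp)
      rcases hx with h | h | h
      · omega
      · exact hL2 x (by simp [h])
      · omega) n₁ q₁ hq₁ hq₁n hcop₁ hval₁
    rw [hjAct_append] at eN eQ hp hr
    simp only [hjAct, hjAct_append] at e1 e2 eN eQ hp hr
    obtain ⟨c1, c2⟩ := hjAct_lin l 1 1 b 1 1 0
    norm_num at *
    rw [c1] at e1 e2
    rw [c2] at e1
    rw [eN, hp] at e1 e2
    rw [eQ, hr] at e1
    apply Tbeta_of n₁ q₁ d (2 * m - a) m hd (by omega)
    · obtain ⟨u, v, huv⟩ := hc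
      exact ⟨-v, u + 2 * v, by linear_combination huv⟩
    · linear_combination -e1 + 2 * hn - hq
    · linear_combination -e2 + hn
  · obtain ⟨b, t, rfl⟩ := List.exists_cons_of_ne_nil hne
    simp only [List.head!_cons, List.tail_cons] at hval₂
    obtain ⟨e1, e2⟩ := hj_unique_s17 ((b + 1) :: (t ++ [2])) (by
      intro x hx
      simp only [List.mem_cons, List.mem_append, List.not_mem_nil, or_false] at hx
      have hb := hL2 b (by simp)
      rcases hx with h | h | h
      · omega
      · exact hL2 x (by simp [h])
      · omega) n₂ q₂ hq₂ hq₂n hcop₂ hval₂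
    simp only [hjAct, hjAct_append] at e1 e2 eN eQ hp hr
    obtain ⟨c1, c2⟩ := hjAct_lin t 2 (-1) 1 0 0 (-1)
    norm_num at c1 c2 e1 e2
    rw [c1] at e1 e2
    rw [c2] at e1
    apply Tbeta_of n₂ q₂ d (m + a) a hd (by omega)
    · obtain ⟨u, v, huv⟩ := hc
      exact ⟨u, v - u, by linear_combination huv⟩
    · linear_combination -e1 + 2 * eN + 2 * eQ - hp - hr + 2 * hn + 2 * hq
    · linear_combination -e2 + 2 * eQ - hr + 2 * hq
end
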